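/- arXiv:2010.11266 — 2 statements merged into one kernel-verified Lean document; each statement's English description precedes it below -/
import Mathlib

section
/- For any natural number K, weights r_1, ..., r_K ≥ 0, vectors β_1, ..., β_K in ℝ^d, and any threshold q ∈ ℝ, the sublevel set A_left = {x ∈ ℝ^d : f(x) ≤ q} is a convex subset of ℝ^d, where f(x) = 1 − exp(−∑_{i=1}^K r_i * log(1 + exp(⟨β_i, x⟩))). -/
open scoped RealInnerProductSpace

/-- The softplus function `t ↦ log (1 + exp t)` is convex. -/
theorem convexOn_log_one_add_exp :
    ConvexOn ℝ Set.univ (fun t : ℝ => Real.log (1 + Real.exp t)) := by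
  refine ⟨convex_univ, fun x _ y _ a b ha hb hab => ?_⟩
  simp only [smul_eq_mul]
  have hx : 0 < 1 + Real.exp x := by positivity
  have hy : 0 < 1 + Real.exp y := by positivity
  set L := a * Real.log (1 + Real.exp x) + b * Real.log (1 + Real.exp y) with hL
  rw [Real.log_le_iff_le_exp (by positivity)]
  have h₁ : Real.exp (-L) ≤ a * (1 + Real.exp x)⁻¹ + b * (1 + Real.exp y)⁻¹ := by
    have h := convexOn_exp.2 (Set.mem_univ (-Real.log (1 + Real.exp x)))
      (Set.mem_univ (-Real.log (1 + Real.exp y))) ha hb hab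
    simp only [smul_eq_mul, Real.exp_neg (Real.log _), Real.exp_log hx, Real.exp_log hy] at h
    refine le_of_eq_of_le (congrArg Real.exp ?_) h
    rw [hL]
    ring
  have h₂ : Real.exp (a * x + b * y - L) ≤
      a * (Real.exp x / (1 + Real.exp x)) + b * (Real.exp y / (1 + Real.exp y)) := by
    have h := convexOn_exp.2 (Set.mem_univ (x - Real.log (1 + Real.exp x)))
      (Set.mem_univ (y - Real.log (1 + Real.exp y))) ha hb hab
    simp only [smul_eq_mul, Real.exp_sub, Real.exp_log hx, Real.exp_log hy] at h
    refine le_of_eq_of_le (congrArg Real.exp ?_) h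
    rw [hL]
    ring
  have hsum : a * (1 + Real.exp x)⁻¹ + b * (1 + Real.exp y)⁻¹ +
      (a * (Real.exp x / (1 + Real.exp x)) + b * (Real.exp y / (1 + Real.exp y))) = 1 := by
    refine Eq.trans ?_ hab
    field_simp
    ring
  calc 1 + Real.exp (a * x + b * y)
      = (Real.exp (-L) + Real.exp (a * x + b * y - L)) * Real.exp L := by
        rw [add_mul, ← Real.exp_add, ← Real.exp_add]
        simp
    _ ≤ 1 * Real.exp L := by
        gcongr
        linarith
    _ = Real.exp L := one_mul _

/-- A nonnegative combination of softplus functions of linear forms is convex. -/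
theorem convexOn_sum_mul_log_one_add_exp_inner {E ι : Type*} [NormedAddCommGroup E]
    [InnerProductSpace ℝ E] [Fintype ι] {r : ι → ℝ} (hr : ∀ i, 0 ≤ r i) (β : ι → E) :
    ConvexOn ℝ Set.univ (fun x : E => ∑ i, r i * Real.log (1 + Real.exp ⟪β i, x⟫)) := by
  refine ⟨convex_univ, fun x _ y _ a b ha hb hab => ?_⟩
  simp only [smul_eq_mul, Finset.mul_sum, ← Finset.sum_add_distrib]
  refine Finset.sum_le_sum fun i _ => ?_
  have h := convexOn_log_one_add_exp.2 (Set.mem_univ ⟪β i, x⟫) (Set.mem_univ ⟪β i, y⟫) ha hb hab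
  simp only [smul_eq_mul] at h
  rw [inner_add_right, real_inner_smul_right, real_inner_smul_right]
  exact (mul_le_mul_of_nonneg_left h (hr i)).trans_eq (by ring)

/-- Theorem 1 (convexity part): the sublevel set
`A_left = {x | f x ≤ q}` of the committee voting probability
`f(x) = 1 - exp (-∑ i, r i * log (1 + exp ⟪β i, x⟫))` is convex. -/
theorem convex_sublevel_committee (d K : ℕ) (r : Fin K → ℝ) (hr : ∀ i, 0 ≤ r i)
    (β : Fin K → EuclideanSpace ℝ (Fin d)) (q : ℝ) :
    Convex ℝ {x : EuclideanSpace ℝ (Fin d) |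
      1 - Real.exp (-(∑ i : Fin K, r i * Real.log (1 + Real.exp ⟪β i, x⟫))) ≤ q} := by
  have hmono : Monotone fun t : ℝ => 1 - Real.exp (-t) := fun s t hst =>
    sub_le_sub_left (Real.exp_le_exp.2 (neg_le_neg hst)) 1
  have h := (convexOn_sum_mul_log_one_add_exp_inner hr β).quasiconvexOn.monotone_comp hmono
  simpa using h q
end

section
/- Let K be a natural number, r_1, ..., r_K > 0, β_1, ..., β_K ∈ ℝ^d, and let q ∈ (0, 1) with q* = −log(1 − q) > 0. Define f(x) = 1 − exp(−∑_{i=1}^K r_i * log(1 + exp(⟨β_i, x⟩))). Then the sublevel set {x ∈ ℝ^d : f(x) ≤ q} is contained in the convex polytope ⋂_{i=1}^K {x ∈ ℝ^d : ⟨β_i, x⟩ ≤ log(exp(q*/r_i) − 1)}, i.e., for every x with f(x) ≤ q and every index i, ⟨β_i, x⟩ ≤ log(exp(q*/r_i) − 1). -/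
open scoped RealInnerProductSpace

/-- Theorem 1 (polytope-containment part): if `f x ≤ q` with
`f(x) = 1 - exp (-∑ i, r i * log (1 + exp ⟪β i, x⟫))`, `r i > 0` and `q ∈ (0,1)`,
then for every `i`, `⟪β i, x⟫ ≤ log (exp (q*/r i) - 1)` where `q* = -log (1-q)`. -/
theorem sublevel_subset_polytope (d K : ℕ) (r : Fin K → ℝ) (hr : ∀ i, 0 < r i)
    (β : Fin K → EuclideanSpace ℝ (Fin d)) (q : ℝ) (hq0 : 0 < q) (hq1 : q < 1)
    (qs : ℝ) (hqs : qs = -Real.log (1 - q)) :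
    ∀ x : EuclideanSpace ℝ (Fin d),
      1 - Real.exp (-(∑ i : Fin K, r i * Real.log (1 + Real.exp ⟪β i, x⟫))) ≤ q →
      ∀ i : Fin K, ⟪β i, x⟫ ≤ Real.log (Real.exp (qs / r i) - 1) := by
  intro x hx i
  have term_nonneg : ∀ j, 0 ≤ r j * Real.log (1 + Real.exp ⟪β j, x⟫) := fun j =>
    mul_nonneg (hr j).le (Real.log_nonneg (by linarith [Real.exp_pos ⟪β j, x⟫]))
  have sum_le : ∑ j, r j * Real.log (1 + Real.exp ⟪β j, x⟫) ≤ qs := by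
    have h := (Real.log_le_iff_le_exp (sub_pos.mpr hq1)).mpr (sub_le_comm.mp hx)
    linarith
  have term_le : r i * Real.log (1 + Real.exp ⟪β i, x⟫) ≤ qs :=
    (Finset.single_le_sum (fun j _ => term_nonneg j) (Finset.mem_univ i)).trans sum_le
  have exp_le : 1 + Real.exp ⟪β i, x⟫ ≤ Real.exp (qs / r i) := by
    rw [← Real.log_le_iff_le_exp (by positivity), le_div_iff₀ (hr i), mul_comm]
    exact term_le
  have exp_le_sub : Real.exp ⟪β i, x⟫ ≤ Real.exp (qs / r i) - 1 := by linarith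
  exact (Real.le_log_iff_exp_le ((Real.exp_pos _).trans_le exp_le_sub)).mpr exp_le_sub
end
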